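/- arXiv:1607.01262 — 2 statements merged into one kernel-verified Lean document; each statement's English description precedes it below -/
import Mathlib

section
/- Let h > 0, let v = (r, c, d) ∈ ℝ³ and let w ∈ ℝ³ be linearly independent from v. Suppose the numerical wall W_w(v) is the semicircle {(α, β) : α > 0 and α² + (β − s)² = ρ²} for some s ∈ ℝ and ρ > 0. Then the radius ρ and center s satisfy (h·r)²·ρ² + Δ̄(v) = (h·r·s − c)², where Δ̄(v) = c² − 2·h·r·d. -/
namespace BridgelandNotes

/-- The central charge `Z_{α,β}(v)` for `v = (r, c, d)`, where `h` plays the role of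
`H²`:  `Z_{α,β}(v) = (−d + β·c + ((α² − β²)/2)·h·r) + i·α·(c − β·h·r)`. -/
noncomputable def centralCharge (h : ℝ) (v : ℝ × ℝ × ℝ) (α β : ℝ) : ℂ :=
  ⟨-v.2.2 + β * v.2.1 + ((α ^ 2 - β ^ 2) / 2) * h * v.1,
    α * (v.2.1 - β * h * v.1)⟩

/-- The numerical wall `W_w(v)` in the `(α, β)`-plane:
`{(α, β) : α > 0 and Re Z_{α,β}(v)·Im Z_{α,β}(w) = Re Z_{α,β}(w)·Im Z_{α,β}(v)}`. -/
noncomputable def numericalWall (h : ℝ) (v w : ℝ × ℝ × ℝ) : Set (ℝ × ℝ) :=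
  {p : ℝ × ℝ | 0 < p.1 ∧
    (centralCharge h v p.1 p.2).re * (centralCharge h w p.1 p.2).im =
      (centralCharge h w p.1 p.2).re * (centralCharge h v p.1 p.2).im}

/-- The discriminant `Δ̄(v) = c² − 2·h·r·d` for `v = (r, c, d)`. -/
def disc (h : ℝ) (v : ℝ × ℝ × ℝ) : ℝ := v.2.1 ^ 2 - 2 * h * v.1 * v.2.2

/-!
Along the semicircle of center `s` and radius `ρ`, the real part of the central charge is its value
at the apex `(ρ, s)` plus `(β - s) / α` times the imaginary part. The wall equation restricted to
the semicircle is therefore affine in `β`, and if it holds identically then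
`Re Z_{ρ,s}(v) • w = Re Z_{ρ,s}(w) • v`. So `Re Z_{ρ,s}(v) = 0` when `v` and `w` are linearly
independent, and `2hr · Re Z_{ρ,s}(v) = 0` is the asserted relation.
-/

/-- The open upper semicircle of center `(0, s)` and radius `ρ` in the `(α, β)`-plane, the shape of
a bounded numerical wall. As in `numericalWall`, the height `α` is the first coordinate. -/
def upperSemicircle (s ρ : ℝ) : Set (ℝ × ℝ) :=
  {p : ℝ × ℝ | 0 < p.1 ∧ p.1 ^ 2 + (p.2 - s) ^ 2 = ρ ^ 2}

section

variable {h s ρ : ℝ} {v w : ℝ × ℝ × ℝ}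

lemma centralCharge_re_eq_apex_add {α β : ℝ} (hp : α ^ 2 + (β - s) ^ 2 = ρ ^ 2) :
    (centralCharge h v α β).re =
      (centralCharge h v ρ s).re + (β - s) * (v.2.1 - β * h * v.1) := by
  simp only [centralCharge]
  linear_combination (h * v.1 / 2) * hp

lemma mem_numericalWall_iff_of_mem_upperSemicircle {p : ℝ × ℝ} (hp : p ∈ upperSemicircle s ρ) :
    p ∈ numericalWall h v w ↔
      (centralCharge h v ρ s).re * (w.2.1 - p.2 * h * w.1) =
        (centralCharge h w ρ s).re * (v.2.1 - p.2 * h * v.1) := by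
  obtain ⟨hα, hcircle⟩ := hp
  have him (u : ℝ × ℝ × ℝ) :
      (centralCharge h u p.1 p.2).im = p.1 * (u.2.1 - p.2 * h * u.1) := rfl
  simp only [numericalWall, Set.mem_ofPred_eq, hα, true_and, him,
    centralCharge_re_eq_apex_add hcircle]
  constructor <;> intro heq
  · apply mul_left_cancel₀ hα.ne'
    linear_combination heq
  · linear_combination p.1 * heq

lemma apex_re_smul_eq_of_upperSemicircle_subset (hh : h ≠ 0) (hρ : 0 < ρ)
    (hsub : upperSemicircle s ρ ⊆ numericalWall h v w) :
    (centralCharge h v ρ s).re • w = (centralCharge h w ρ s).re • v := by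
  have wall_eq {p : ℝ × ℝ} (hp : p ∈ upperSemicircle s ρ) :
      (centralCharge h v ρ s).re * (w.2.1 - p.2 * h * w.1) =
        (centralCharge h w ρ s).re * (v.2.1 - p.2 * h * v.1) :=
    (mem_numericalWall_iff_of_mem_upperSemicircle hp).1 (hsub hp)
  have at_apex := wall_eq (p := (ρ, s)) ⟨hρ, by ring⟩
  have off_apex := wall_eq (p := (3 / 5 * ρ, s + 4 / 5 * ρ)) ⟨by positivity, by ring⟩
  have rank_eq : (centralCharge h v ρ s).re * w.1 = (centralCharge h w ρ s).re * v.1 := by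
    apply mul_left_cancel₀ (mul_ne_zero hh hρ.ne')
    linear_combination (5 / 4) * (at_apex - off_apex)
  have degree_eq : (centralCharge h v ρ s).re * w.2.1 = (centralCharge h w ρ s).re * v.2.1 := by
    linear_combination at_apex + s * h * rank_eq
  -- `Re Z` is linear with coefficient `-1` at `d`, and `Re Z(v) * Re Z(w)` is symmetric.
  have ch₂_eq : (centralCharge h v ρ s).re * w.2.2 = (centralCharge h w ρ s).re * v.2.2 := by
    have re_eq (u : ℝ × ℝ × ℝ) : (centralCharge h u ρ s).re =
        -u.2.2 + s * u.2.1 + ((ρ ^ 2 - s ^ 2) / 2) * h * u.1 := rfl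
    linear_combination s * degree_eq + ((ρ ^ 2 - s ^ 2) / 2) * h * rank_eq +
      (centralCharge h v ρ s).re * re_eq w - (centralCharge h w ρ s).re * re_eq v
  exact Prod.ext rank_eq (Prod.ext degree_eq ch₂_eq)

lemma apex_re_eq_zero_of_upperSemicircle_subset (hh : h ≠ 0)
    (hvw : LinearIndependent ℝ ![v, w]) (hρ : 0 < ρ)
    (hsub : upperSemicircle s ρ ⊆ numericalWall h v w) : (centralCharge h v ρ s).re = 0 := by
  have hsmul := apex_re_smul_eq_of_upperSemicircle_subset hh hρ hsub
  refine (LinearIndependent.pair_iff.1 hvw (-(centralCharge h w ρ s).re) _ ?_).2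
  rw [hsmul, neg_smul, neg_add_cancel]

lemma radius_center_defect_eq_mul_apex_re :
    (h * v.1) ^ 2 * ρ ^ 2 + disc h v - (h * v.1 * s - v.2.1) ^ 2 =
      2 * h * v.1 * (centralCharge h v ρ s).re := by
  simp only [disc, centralCharge]
  ring

end

theorem radius_center_relation_general (h : ℝ) (v w : ℝ × ℝ × ℝ)
    (hvw : LinearIndependent ℝ ![v, w]) (s ρ : ℝ) (hρ : 0 < ρ)
    (hsub : upperSemicircle s ρ ⊆ numericalWall h v w) :
    (h * v.1) ^ 2 * ρ ^ 2 + disc h v = (h * v.1 * s - v.2.1) ^ 2 := by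
  rw [← sub_eq_zero, radius_center_defect_eq_mul_apex_re]
  obtain rfl | hh := eq_or_ne h 0
  · ring
  · rw [apex_re_eq_zero_of_upperSemicircle_subset hh hvw hρ hsub, mul_zero]

/-- The radius `ρ` and center `s` of a semicircular numerical wall for `v = (r, c, d)`
satisfy `(h·r)²·ρ² + Δ̄(v) = (h·r·s − c)²`. -/
theorem radius_center_relation (h : ℝ) (hh : 0 < h)
    (v w : ℝ × ℝ × ℝ) (hvw : LinearIndependent ℝ ![v, w]) (s ρ : ℝ) (hρ : 0 < ρ)
    (hW : numericalWall h v w =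
      {p : ℝ × ℝ | 0 < p.1 ∧ p.1 ^ 2 + (p.2 - s) ^ 2 = ρ ^ 2}) :
    (h * v.1) ^ 2 * ρ ^ 2 + disc h v = (h * v.1 * s - v.2.1) ^ 2 :=
  radius_center_relation_general h v w hvw s ρ hρ hW.ge

end BridgelandNotes
end

section
/- Let A be a finite-dimensional associative ℂ-algebra, and let Z assign to every finite-dimensional (right) A-module M a complex number, additively on short exact sequences of finite-dimensional A-modules (Z(M) = Z(M′) + Z(M″) whenever 0 → M′ → M → M″ → 0 is exact), such that every nonzero finite-dimensional A-module M satisfies Im Z(M) ≥ 0, and Im Z(M) = 0 implies Re Z(M) < 0. Then every nonzero finite-dimensional A-module M admits a Harder–Narasimhan filtration: a finite chain of submodules 0 = M₀ ⊊ M₁ ⊊ … ⊊ Mₙ = M such that each subquotient A_i = M_i/M_{i−1} is Z-semistable and μ(A₁) > μ(A₂) > … > μ(Aₙ). -/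
namespace BridgelandNotes

/-- For a central charge `Z` on finite-dimensional right `A`-modules (encoded as
left `Aᵐᵒᵖ`-modules; over the finite-dimensional `ℂ`-algebra `A`, finite-dimensional
is the same as finitely generated), a nonzero module `M` is `Z`-semistable if
`μ(N) ≤ μ(M)`, i.e. `D(N)·R(M) ≤ D(M)·R(N)`, for every nonzero proper submodule
`N ⊆ M`, where `R = Im ∘ Z` and `D = −Re ∘ Z`. -/
def ModuleSemistable {A : Type} [Ring A]
    (Z : (M : Type) → [AddCommGroup M] → [Module Aᵐᵒᵖ M] → ℂ)
    (M : Type) [AddCommGroup M] [Module Aᵐᵒᵖ M] : Prop :=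
  Nontrivial M ∧
    ∀ N : Submodule Aᵐᵒᵖ M, N ≠ ⊥ → N ≠ ⊤ →
      -(Z N).re * (Z M).im ≤ -(Z M).re * (Z N).im

/-- The subquotient `M₂/M₁` for nested submodules `M₁ ≤ M₂` of `M`. -/
abbrev subquotient {A : Type} [Ring A] {M : Type} [AddCommGroup M] [Module Aᵐᵒᵖ M]
    (N₁ N₂ : Submodule Aᵐᵒᵖ M) : Type :=
  N₂ ⧸ (N₁.comap N₂.subtype)

/-!
By additivity, slopes of subquotients of `M` are read off from the function `z N = Z N` on the
lattice of submodules, which satisfies `z a + z b = z (a ⊔ b) + z (a ⊓ b)`. On a lattice of finite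
length such a function takes only finitely many values, so above every `a < ⊤` there is a step
`a < b` of maximal slope, and among those one that is maximal for inclusion. Maximality of the slope
makes `b / a` semistable; maximality of `b` makes every `c / a` with `b < c` of smaller slope,
hence, by the see-saw property, `c / b` too. Iterating from `⊥` gives the filtration.
-/

/-- The values a central charge may take on nonzero objects: the open upper half-plane together with
the negative real axis. -/
def semiclosedUpperHalfPlane : Set ℂ :=
  {w | 0 ≤ w.im ∧ (w.im = 0 → w.re < 0)}

/-- The slope `μ = D / R` of an object of central charge `w = -D + i R`, equal to `⊤` if `R = 0`. -/
noncomputable def chargeSlope (w : ℂ) : WithTop ℝ :=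
  if w.im = 0 then ⊤ else ↑(-w.re / w.im)

section Slope

variable {u v : ℂ}

theorem add_mem_semiclosedUpperHalfPlane (hu : u ∈ semiclosedUpperHalfPlane)
    (hv : v ∈ semiclosedUpperHalfPlane) : u + v ∈ semiclosedUpperHalfPlane := by
  obtain ⟨hu₀, hu⟩ := hu
  obtain ⟨hv₀, hv⟩ := hv
  refine ⟨add_nonneg hu₀ hv₀, fun h ↦ ?_⟩
  rw [Complex.add_im] at h
  exact add_neg (hu (by linarith)) (hv (by linarith))

theorem chargeSlope_le_chargeSlope_iff (hu : u ∈ semiclosedUpperHalfPlane)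
    (hv : v ∈ semiclosedUpperHalfPlane) :
    chargeSlope u ≤ chargeSlope v ↔ -u.re * v.im ≤ -v.re * u.im := by
  obtain ⟨hu₀, hu⟩ := hu
  obtain ⟨hv₀, hv⟩ := hv
  rcases hv₀.eq_or_lt' with hv_im | hv_im
  · have := mul_nonneg (neg_nonneg.2 (hv hv_im).le) hu₀
    simpa [chargeSlope, hv_im] using this
  rcases hu₀.eq_or_lt' with hu_im | hu_im
  · have := mul_pos (neg_pos.2 (hu hu_im)) hv_im
    simpa [chargeSlope, hu_im, hv_im.ne'] using this
  · simpa only [chargeSlope, hu_im.ne', hv_im.ne', if_false, WithTop.coe_le_coe] using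
      div_le_div_iff₀ hu_im hv_im

theorem chargeSlope_lt_chargeSlope_iff (hu : u ∈ semiclosedUpperHalfPlane)
    (hv : v ∈ semiclosedUpperHalfPlane) :
    chargeSlope u < chargeSlope v ↔ -u.re * v.im < -v.re * u.im := by
  rw [← not_le, chargeSlope_le_chargeSlope_iff hv hu, not_le]

theorem chargeSlope_add_lt_left_iff (hu : u ∈ semiclosedUpperHalfPlane)
    (hv : v ∈ semiclosedUpperHalfPlane) :
    chargeSlope (u + v) < chargeSlope u ↔ chargeSlope v < chargeSlope u := by
  rw [chargeSlope_lt_chargeSlope_iff (add_mem_semiclosedUpperHalfPlane hu hv) hu,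
    chargeSlope_lt_chargeSlope_iff hv hu, Complex.add_re, Complex.add_im]
  constructor <;> intro h <;> linarith

end Slope

theorem finite_range_of_add_eq_sup_add_inf {L G : Type*} [Lattice L] [BoundedOrder L]
    [WellFoundedLT L] [WellFoundedGT L] [AddCommGroup G] {z : L → G}
    (hz : ∀ a b, z a + z b = z (a ⊔ b) + z (a ⊓ b)) : (Set.range z).Finite := by
  suffices h : ∀ x, (z '' Set.Iic x).Finite by simpa using h ⊤
  intro x
  induction x using WellFoundedLT.induction with
  | ind x ih =>
    obtain rfl | hx := eq_bot_or_bot_lt x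
    · simp
    obtain ⟨c, -, hc⟩ := exists_le_covBy_of_lt hx
    -- An element below `x` lies below its coatom `c` or has join `x` with `c`.
    refine ((ih c hc.lt).union ((ih c hc.lt).image (z x - z c + ·))).subset ?_
    rintro _ ⟨y, hy : y ≤ x, rfl⟩
    rcases hc.eq_or_eq le_sup_right (sup_le hy hc.le) with hyc | hyc
    · exact .inl ⟨y, sup_eq_right.1 hyc, rfl⟩
    · refine .inr ⟨z (y ⊓ c), ⟨y ⊓ c, inf_le_right, rfl⟩, ?_⟩
      change z x - z c + z (y ⊓ c) = z y
      rw [sub_add_eq_add_sub, ← hyc, ← hz, add_sub_cancel_right]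

theorem exists_max_image_forall_gt_lt {α β : Type*} [Preorder α] [WellFoundedGT α]
    [LinearOrder β] (f : α → β) {s : Set α} (hs : s.Nonempty) (hf : (f '' s).Finite) :
    ∃ b ∈ s, (∀ c ∈ s, f c ≤ f b) ∧ ∀ c ∈ s, b < c → f c < f b := by
  obtain ⟨_, ⟨b₀, hb₀, rfl⟩, hmax⟩ := Set.exists_max_image _ id hf (hs.image f)
  obtain ⟨b, ⟨hb, hb_max⟩, hb_top⟩ :=
    wellFounded_gt.has_min {b ∈ s | ∀ c ∈ s, f c ≤ f b}
      ⟨b₀, hb₀, fun c hc ↦ hmax _ (Set.mem_image_of_mem f hc)⟩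
  refine ⟨b, hb, hb_max, fun c hc hbc ↦ ?_⟩
  by_contra! hle
  exact hb_top c ⟨hc, fun d hd ↦ (hb_max d hd).trans hle⟩ hbc

theorem exists_chain_to_top {α : Type*} [Preorder α] [OrderTop α] [WellFoundedGT α]
    {r : α → α → Prop} (hr : ∀ a ≠ ⊤, ∃ b > a, r a b) (a : α) :
    ∃ (n : ℕ) (F : ℕ → α), F 0 = a ∧ F n = ⊤ ∧ ∀ i < n, r (F i) (F (i + 1)) := by
  induction a using WellFoundedGT.induction with
  | ind a ih =>
    by_cases ha : a = ⊤
    · exact ⟨0, fun _ ↦ a, rfl, ha, by simp⟩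
    obtain ⟨b, hab, hrab⟩ := hr a ha
    obtain ⟨n, F, rfl, hn, hF⟩ := ih b hab
    refine ⟨n + 1, fun | 0 => a | i + 1 => F i, rfl, hn, ?_⟩
    rintro (_ | i) hi
    · exact hrab
    · exact hF i (Nat.lt_of_succ_lt_succ hi)

/-- For `z` the central charge on a lattice of subobjects, `b / a` is the maximal destabilizing
subobject of `⊤ / a`: the slope of `b / a` is maximal among the nonzero subobjects of `⊤ / a`, and
no strictly larger subobject attains it. If `⊤ / a` is itself semistable, this is `⊤ / a`. -/
structure IsMaximalDestabilizing {L : Type*} [Preorder L] (z : L → ℂ) (a b : L) : Prop where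
  lt : a < b
  slope_le : ∀ c, a < c → chargeSlope (z c - z a) ≤ chargeSlope (z b - z a)
  slope_lt : ∀ c, b < c → chargeSlope (z c - z a) < chargeSlope (z b - z a)

section Lattice

variable {L : Type*}

theorem exists_isMaximalDestabilizing [Lattice L] [BoundedOrder L] [WellFoundedLT L]
    [WellFoundedGT L] {z : L → ℂ} (hz : ∀ a b, z a + z b = z (a ⊔ b) + z (a ⊓ b)) {a : L}
    (ha : a ≠ ⊤) : ∃ b, IsMaximalDestabilizing z a b := by
  have hfin : ((fun c ↦ chargeSlope (z c - z a)) '' Set.Ioi a).Finite := by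
    refine ((finite_range_of_add_eq_sup_add_inf hz).image
      fun w ↦ chargeSlope (w - z a)).subset ?_
    rintro _ ⟨c, -, rfl⟩
    exact ⟨z c, ⟨c, rfl⟩, rfl⟩
  obtain ⟨b, hab, hle, hlt⟩ :=
    exists_max_image_forall_gt_lt _ ⟨⊤, lt_top_iff_ne_top.2 ha⟩ hfin
  exact ⟨b, hab, hle, fun c hbc ↦ hlt c (lt_trans hab hbc) hbc⟩

theorem IsMaximalDestabilizing.chargeSlope_sub_lt [Preorder L] {z : L → ℂ}
    (hpos : ∀ a b, a < b → z b - z a ∈ semiclosedUpperHalfPlane) {a b c : L}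
    (hab : IsMaximalDestabilizing z a b) (hbc : b < c) :
    chargeSlope (z c - z b) < chargeSlope (z b - z a) := by
  have h := hab.slope_lt c hbc
  rw [← sub_add_sub_cancel' (z b) (z a) (z c)] at h
  exact (chargeSlope_add_lt_left_iff (hpos a b hab.lt) (hpos b c hbc)).1 h

theorem exists_chain_isMaximalDestabilizing [Lattice L] [BoundedOrder L] [WellFoundedLT L]
    [WellFoundedGT L] {z : L → ℂ} (hz : ∀ a b, z a + z b = z (a ⊔ b) + z (a ⊓ b)) :
    ∃ (n : ℕ) (F : ℕ → L), F 0 = ⊥ ∧ F n = ⊤ ∧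
      ∀ i < n, IsMaximalDestabilizing z (F i) (F (i + 1)) :=
  exists_chain_to_top
    (fun _ ha ↦ (exists_isMaximalDestabilizing hz ha).imp fun _ hab ↦ ⟨hab.lt, hab⟩) ⊥

end Lattice

universe u v w

/-- Additivity on short exact sequences for an invariant `Z` of `R`-modules. Only modules of finite
length matter: the value of `Z` on other modules is unconstrained. -/
def IsAdditiveOnFiniteLength {R : Type u} [Ring R] {G : Type w} [Add G]
    (Z : (M : Type v) → [AddCommGroup M] → [Module R M] → G) : Prop :=
  ∀ (M₁ M₂ M₃ : Type v)
    [AddCommGroup M₁] [Module R M₁] [IsNoetherian R M₁] [IsArtinian R M₁]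
    [AddCommGroup M₂] [Module R M₂] [IsNoetherian R M₂] [IsArtinian R M₂]
    [AddCommGroup M₃] [Module R M₃] [IsNoetherian R M₃] [IsArtinian R M₃]
    (f : M₁ →ₗ[R] M₂) (g : M₂ →ₗ[R] M₃),
    Function.Injective f → Function.Surjective g → Function.Exact f g → Z M₂ = Z M₁ + Z M₃

namespace IsAdditiveOnFiniteLength

variable {R : Type u} [Ring R] {G : Type w} [AddCommGroup G]
  {Z : (M : Type v) → [AddCommGroup M] → [Module R M] → G} (hZ : IsAdditiveOnFiniteLength Z)
  {M : Type v} [AddCommGroup M] [Module R M] [IsNoetherian R M] [IsArtinian R M]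
include hZ

theorem map_quotient (N : Submodule R M) : Z (M ⧸ N) = Z M - Z N :=
  eq_sub_of_add_eq' (hZ N M (M ⧸ N) N.subtype N.mkQ N.injective_subtype N.mkQ_surjective
    (LinearMap.exact_subtype_mkQ N)).symm

theorem map_punit : Z PUnit = 0 :=
  left_eq_add.1 (hZ PUnit PUnit PUnit .id .id Function.injective_id Function.surjective_id
    fun x ↦ ⟨fun _ ↦ ⟨x, rfl⟩, fun _ ↦ rfl⟩)

theorem map_congr {M' : Type v} [AddCommGroup M'] [Module R M'] [IsNoetherian R M']
    [IsArtinian R M'] (e : M ≃ₗ[R] M') : Z M = Z M' := by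
  have h := hZ PUnit M M' 0 e (Function.injective_of_subsingleton _) e.surjective
    ((LinearMap.exact_zero_iff_injective _ e.toLinearMap).2 e.injective)
  rwa [hZ.map_punit, zero_add] at h

theorem map_subquotient {N₁ N₂ : Submodule R M} (h : N₁ ≤ N₂) :
    Z (N₂ ⧸ N₁.comap N₂.subtype) = Z N₂ - Z N₁ := by
  rw [hZ.map_quotient, hZ.map_congr (Submodule.comapSubtypeEquivOfLe h)]

theorem map_add_map_eq_map_sup_add_map_inf (N₁ N₂ : Submodule R M) :
    Z N₁ + Z N₂ = Z ↥(N₁ ⊔ N₂) + Z ↥(N₁ ⊓ N₂) := by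
  have h : Z (N₁ ⧸ (N₁ ⊓ N₂).comap N₁.subtype) = Z (↥(N₁ ⊔ N₂) ⧸ N₂.comap (N₁ ⊔ N₂).subtype) :=
    hZ.map_congr (LinearMap.quotientInfEquivSupQuotient N₁ N₂)
  rw [hZ.map_subquotient inf_le_left, hZ.map_subquotient le_sup_right] at h
  rwa [← sub_eq_sub_iff_add_eq_add]

theorem map_submodule_quotient (N : Submodule R M) (P : Submodule R (M ⧸ N)) :
    Z P = Z (P.comap N.mkQ) - Z N := by
  have h := hZ.map_congr (Submodule.quotientQuotientEquivQuotient N _ (N.le_comap_mkQ P))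
  rw [Submodule.map_comap_eq_of_surjective N.mkQ_surjective, hZ.map_quotient, hZ.map_quotient,
    hZ.map_quotient, sub_sub, sub_right_inj] at h
  exact eq_sub_of_add_eq' h

theorem exists_map_eq_sub_of_ne_bot {N₁ N₂ : Submodule R M} (h : N₁ ≤ N₂)
    {P : Submodule R (N₂ ⧸ N₁.comap N₂.subtype)} (hP : P ≠ ⊥) :
    ∃ N : Submodule R M, N₁ < N ∧ Z P = Z N - Z N₁ := by
  have hlt := Submodule.map_strictMono_of_injective N₂.injective_subtype
    (Submodule.comap_strictMono_of_surjective (N₁.comap N₂.subtype).mkQ_surjective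
      (bot_lt_iff_ne_bot.2 hP))
  refine ⟨(P.comap (N₁.comap N₂.subtype).mkQ).map N₂.subtype, ?_, ?_⟩
  · rwa [Submodule.comap_bot, Submodule.ker_mkQ, Submodule.map_comap_subtype,
      inf_eq_right.2 h] at hlt
  · rw [hZ.map_submodule_quotient, hZ.map_congr (Submodule.comapSubtypeEquivOfLe h),
      hZ.map_congr (Submodule.equivMapOfInjective N₂.subtype N₂.injective_subtype _)]

end IsAdditiveOnFiniteLength

theorem nontrivial_subquotient {R M : Type*} [Ring R] [AddCommGroup M] [Module R M]
    {N₁ N₂ : Submodule R M} (h : N₁ < N₂) : Nontrivial (N₂ ⧸ N₁.comap N₂.subtype) :=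
  Submodule.Quotient.nontrivial_iff.2 fun htop ↦ h.not_ge (Submodule.comap_subtype_eq_top.1 htop)

section CentralCharge

variable {A : Type} [Ring A] {Z : (M : Type) → [AddCommGroup M] → [Module Aᵐᵒᵖ M] → ℂ}
  {M : Type} [AddCommGroup M] [Module Aᵐᵒᵖ M] [IsNoetherian Aᵐᵒᵖ M] [IsArtinian Aᵐᵒᵖ M]

theorem IsMaximalDestabilizing.moduleSemistable (hZ : IsAdditiveOnFiniteLength Z)
    (hpos : ∀ N₁ N₂ : Submodule Aᵐᵒᵖ M, N₁ < N₂ → Z N₂ - Z N₁ ∈ semiclosedUpperHalfPlane)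
    {N₁ N₂ : Submodule Aᵐᵒᵖ M}
    (h : IsMaximalDestabilizing (fun N : Submodule Aᵐᵒᵖ M ↦ Z N) N₁ N₂) :
    ModuleSemistable Z (subquotient N₁ N₂) := by
  refine ⟨nontrivial_subquotient h.lt, fun P hP _ ↦ ?_⟩
  obtain ⟨N, hN, hPN⟩ := hZ.exists_map_eq_sub_of_ne_bot h.lt.le hP
  rw [hPN, hZ.map_subquotient h.lt.le]
  exact (chargeSlope_le_chargeSlope_iff (hpos _ _ hN) (hpos _ _ h.lt)).1 (h.slope_le N hN)

end CentralCharge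

theorem module_hn_filtration_exists_general (A : Type) [Ring A]
    (Z : (M : Type) → [AddCommGroup M] → [Module Aᵐᵒᵖ M] → ℂ)
    (hZ : IsAdditiveOnFiniteLength Z)
    (hpos : ∀ (M : Type) [AddCommGroup M] [Module Aᵐᵒᵖ M] [IsNoetherian Aᵐᵒᵖ M]
      [IsArtinian Aᵐᵒᵖ M], Nontrivial M → Z M ∈ semiclosedUpperHalfPlane)
    (M : Type) [AddCommGroup M] [Module Aᵐᵒᵖ M] [IsNoetherian Aᵐᵒᵖ M] [IsArtinian Aᵐᵒᵖ M] :
    ∃ (n : ℕ) (F : ℕ → Submodule Aᵐᵒᵖ M),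
      F 0 = ⊥ ∧ F n = ⊤ ∧ (∀ i, i < n → F i < F (i + 1)) ∧
      (∀ i, i < n → ModuleSemistable Z (subquotient (F i) (F (i + 1)))) ∧
      ∀ i, i + 1 < n →
        -(Z (subquotient (F (i + 1)) (F (i + 2)))).re *
            (Z (subquotient (F i) (F (i + 1)))).im <
          -(Z (subquotient (F i) (F (i + 1)))).re *
            (Z (subquotient (F (i + 1)) (F (i + 2)))).im := by
  have hpos_sub (N₁ N₂ : Submodule Aᵐᵒᵖ M) (h : N₁ < N₂) :
      Z N₂ - Z N₁ ∈ semiclosedUpperHalfPlane := by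
    rw [← hZ.map_subquotient h.le]
    exact hpos _ (nontrivial_subquotient h)
  obtain ⟨n, F, hF₀, hFn, hF⟩ := exists_chain_isMaximalDestabilizing
    (z := fun N : Submodule Aᵐᵒᵖ M ↦ Z N) hZ.map_add_map_eq_map_sup_add_map_inf
  refine ⟨n, F, hF₀, hFn, fun i hi ↦ (hF i hi).lt,
    fun i hi ↦ (hF i hi).moduleSemistable hZ hpos_sub, fun i hi ↦ ?_⟩
  have hstep := hF i (Nat.lt_of_succ_lt hi)
  have hlt : F (i + 1) < F (i + 2) := (hF (i + 1) hi).lt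
  rw [hZ.map_subquotient hstep.lt.le, hZ.map_subquotient hlt.le,
    ← chargeSlope_lt_chargeSlope_iff (hpos_sub _ _ hlt) (hpos_sub _ _ hstep.lt)]
  exact hstep.chargeSlope_sub_lt hpos_sub hlt

/-- Existence of Harder–Narasimhan filtrations for finite-dimensional modules over a
finite-dimensional `ℂ`-algebra `A`: if `Z` assigns a complex number to every
finite-dimensional (right) `A`-module, additively on short exact sequences, with
`Im Z(M) ≥ 0` for every nonzero `M` and `Re Z(M) < 0` whenever `Im Z(M) = 0`, then
every nonzero finite-dimensional `A`-module `M` admits a filtration by submodules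
`0 = M₀ ⊊ M₁ ⊊ … ⊊ Mₙ = M` whose subquotients `A_i = M_i/M_{i−1}` are `Z`-semistable
with strictly decreasing slopes `μ(A₁) > … > μ(Aₙ)` (encoded by cross-multiplication:
`μ(A_{i+1}) < μ(A_i)` iff `D(A_{i+1})·R(A_i) < D(A_i)·R(A_{i+1})`). -/
theorem module_hn_filtration_exists (A : Type) [Ring A] [Algebra ℂ A]
    [FiniteDimensional ℂ A]
    (Z : (M : Type) → [AddCommGroup M] → [Module Aᵐᵒᵖ M] → ℂ)
    (hadd : ∀ (M₁ M₂ M₃ : Type)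
      [AddCommGroup M₁] [Module Aᵐᵒᵖ M₁] [Module.Finite Aᵐᵒᵖ M₁]
      [AddCommGroup M₂] [Module Aᵐᵒᵖ M₂] [Module.Finite Aᵐᵒᵖ M₂]
      [AddCommGroup M₃] [Module Aᵐᵒᵖ M₃] [Module.Finite Aᵐᵒᵖ M₃]
      (f : M₁ →ₗ[Aᵐᵒᵖ] M₂) (g : M₂ →ₗ[Aᵐᵒᵖ] M₃),
      Function.Injective f → Function.Surjective g →
      LinearMap.range f = LinearMap.ker g → Z M₂ = Z M₁ + Z M₃)
    (hpos : ∀ (M : Type) [AddCommGroup M] [Module Aᵐᵒᵖ M] [Module.Finite Aᵐᵒᵖ M],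
      Nontrivial M → 0 ≤ (Z M).im ∧ ((Z M).im = 0 → (Z M).re < 0))
    (M : Type) [AddCommGroup M] [Module Aᵐᵒᵖ M] [Module.Finite Aᵐᵒᵖ M]
    (hM : Nontrivial M) :
    ∃ (n : ℕ) (F : ℕ → Submodule Aᵐᵒᵖ M),
      F 0 = ⊥ ∧ F n = ⊤ ∧ (∀ i, i < n → F i < F (i + 1)) ∧
      (∀ i, i < n → ModuleSemistable Z (subquotient (F i) (F (i + 1)))) ∧
      ∀ i, i + 1 < n →
        -(Z (subquotient (F (i + 1)) (F (i + 2)))).re *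
            (Z (subquotient (F i) (F (i + 1)))).im <
          -(Z (subquotient (F i) (F (i + 1)))).re *
            (Z (subquotient (F (i + 1)) (F (i + 2)))).im :=
  have : IsArtinianRing Aᵐᵒᵖ := .of_finite ℂ Aᵐᵒᵖ
  module_hn_filtration_exists_general A Z
    (fun M₁ M₂ M₃ _ _ _ _ _ _ _ _ _ _ _ _ f g hf hg hfg ↦
      hadd M₁ M₂ M₃ f g hf hg (LinearMap.exact_iff.1 hfg).symm)
    (fun M _ _ _ _ ↦ hpos M) M

end BridgelandNotes
end
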